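/- arXiv:2510.01522 — 2 statements merged into one kernel-verified Lean document; each statement's English description precedes it below -/
import Mathlib

section
/- Let m ∈ ℕ with m ≥ 2, ε ∈ (0, 1/2), h > 0, and δ ≥ 2√2·(6ε + σ‖W‖/n). Suppose ẑ ∈ ℂ_1^n satisfies ẑ = F_1(ẑ) and ℓ_1(ẑ, z*) ≤ ε², and V̂ ∈ 𝒱_m satisfies V̂ = F_m(V̂) and ℓ_m(V̂, z*) ≤ ε². For each k = 0, 1, …, ⌈nε/h⌉ set s_k = n − kh ∈ ℝ, and for each j ∈ [n] let z_{s_k}^{(−j)} ∈ ℂ_{≤1}^n be the fixed point of G^{(−j)}(·, s_k, 2δn). Then ℓ_m(V̂, ẑ) ≤ 72·Σ_{k=0}^{⌈nε/h⌉} ( (1/n)·Σ_{j=1}^n 1{ σ·|[W z_{s_k}^{(−j)}]_j| > (1 − ε − 4δ − 3σ‖W‖/n)·n − h } ) + (72h²/(δ²n²))·1{h > δ√n}. -/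
open scoped Classical
open Matrix

noncomputable section

namespace PhaseSync

/-- Euclidean norm of a complex vector. -/
def enorm {k : ℕ} (v : Fin k → ℂ) : ℝ := Real.sqrt (∑ i, ‖v i‖ ^ 2)

/-- Frobenius norm of a complex matrix. -/
def fnorm {k l : ℕ} (A : Matrix (Fin k) (Fin l) ℂ) : ℝ :=
  Real.sqrt (∑ i, ∑ j, ‖A i j‖ ^ 2)

/-- L2 operator norm of a square complex matrix. -/
def opNorm {k : ℕ} (A : Matrix (Fin k) (Fin k) ℂ) : ℝ :=
  ‖Matrix.toEuclideanCLM (𝕜 := ℂ) (n := Fin k) A‖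

/-- Indicator function of a proposition. -/
def ind (P : Prop) : ℝ := if P then 1 else 0

/-- The loss ℓ_m(V, z) = min_{a : ‖a‖=1} ‖V - a zᴴ‖_F² / n. -/
def lossM {k l : ℕ} (V : Matrix (Fin k) (Fin l) ℂ) (z : Fin l → ℂ) : ℝ :=
  sInf { r : ℝ | ∃ a : Fin k → ℂ, enorm a = 1 ∧
    r = fnorm (V - Matrix.vecMulVec a (star z)) ^ 2 / l }

/-- The loss ℓ_1(z', z) = min_{|a|=1} ‖z' - a z‖² / n. -/
def loss1 {l : ℕ} (z' z : Fin l → ℂ) : ℝ :=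
  sInf { r : ℝ | ∃ a : ℂ, ‖a‖ = 1 ∧ r = enorm (z' - a • z) ^ 2 / l }

/-- The mapping F₁: entrywise normalization of Y z. -/
def F1 {l : ℕ} (Y : Matrix (Fin l) (Fin l) ℂ) (z : Fin l → ℂ) : Fin l → ℂ :=
  fun j => if Y.mulVec z j ≠ 0 then Y.mulVec z j / (‖Y.mulVec z j‖ : ℂ) else z j

/-- jth column of a matrix. -/
def col {k l : ℕ} (A : Matrix (Fin k) (Fin l) ℂ) (j : Fin l) : Fin k → ℂ := fun i => A i j

/-- The mapping F_m: columnwise normalization of V Yᴴ. -/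
def Fm {k l : ℕ} (Y : Matrix (Fin l) (Fin l) ℂ) (V : Matrix (Fin k) (Fin l) ℂ) :
    Matrix (Fin k) (Fin l) ℂ :=
  Matrix.of fun i j =>
    if col (V * Yᴴ) j ≠ 0 then (V * Yᴴ) i j / ((enorm (col (V * Yᴴ) j) : ℝ) : ℂ) else V i j

/-- g_t(x) = x / max(|x|, t). -/
def gfun (t : ℝ) (x : ℂ) : ℂ := x / ((max (‖x‖) t : ℝ) : ℂ)

/-- The mapping G(z, s, t), coordinatewise g_t(z*_j s + σ [W z]_j). -/
def G {l : ℕ} (zstar : Fin l → ℂ) (σ : ℝ) (W : Matrix (Fin l) (Fin l) ℂ)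
    (z : Fin l → ℂ) (s : ℂ) (t : ℝ) : Fin l → ℂ :=
  fun j => gfun t (zstar j * s + (σ : ℂ) * W.mulVec z j)

/-- The mapping F₁'(z, s), entrywise normalization of z* s + σ W z. -/
def F1' {l : ℕ} (zstar : Fin l → ℂ) (σ : ℝ) (W : Matrix (Fin l) (Fin l) ℂ)
    (z : Fin l → ℂ) (s : ℂ) : Fin l → ℂ :=
  fun j =>
    if zstar j * s + (σ : ℂ) * W.mulVec z j ≠ 0 then
      (zstar j * s + (σ : ℂ) * W.mulVec z j) /
        ((‖zstar j * s + (σ : ℂ) * W.mulVec z j‖ : ℝ) : ℂ)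
    else z j

/-- W with jth row and column zeroed out. -/
def Wminus {l : ℕ} (W : Matrix (Fin l) (Fin l) ℂ) (j : Fin l) : Matrix (Fin l) (Fin l) ℂ :=
  Matrix.of fun k i => if k = j ∨ i = j then 0 else W k i

/-- l2 norm of a finite family. -/
def L2 {n : ℕ} {E : Type*} [NormedAddCommGroup E] (f : Fin n → E) : ℝ := Real.sqrt (∑ j, ‖f j‖ ^ 2)

section aux
variable {n : ℕ} {E F : Type*} [NormedAddCommGroup E] [NormedAddCommGroup F]

lemma L2_eq (f : Fin n → E) : L2 f = ‖(WithLp.toLp 2 f : PiLp 2 (fun _ : Fin n => E))‖ := by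
  rw [PiLp.norm_eq_of_L2]; rfl

lemma L2_nonneg (f : Fin n → E) : 0 ≤ L2 f := Real.sqrt_nonneg _

lemma L2_sq (f : Fin n → E) : L2 f ^ 2 = ∑ j, ‖f j‖ ^ 2 :=
  Real.sq_sqrt (Finset.sum_nonneg fun _ _ => by positivity)

lemma L2_add (f g : Fin n → E) : L2 (fun j => f j + g j) ≤ L2 f + L2 g := by
  have := norm_add_le (WithLp.toLp 2 f : PiLp 2 (fun _ : Fin n => E)) (WithLp.toLp 2 g)
  rw [← WithLp.toLp_add, ← L2_eq, ← L2_eq, ← L2_eq] at this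
  exact this

lemma L2_mono {f : Fin n → E} {g : Fin n → F} (h : ∀ j, ‖f j‖ ≤ ‖g j‖) : L2 f ≤ L2 g := by
  apply Real.sqrt_le_sqrt
  apply Finset.sum_le_sum
  intro j _
  exact pow_le_pow_left₀ (norm_nonneg _) (h j) 2

lemma L2_real_mul (β : ℝ) (hβ : 0 ≤ β) (g : Fin n → F) :
    L2 (fun j => β * ‖g j‖) = β * L2 g := by
  unfold L2
  rw [← Real.sqrt_sq hβ, ← Real.sqrt_mul (by positivity), Real.sqrt_sq hβ, Finset.mul_sum]
  congr 1
  apply Finset.sum_congr rfl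
  intro j _
  rw [Real.norm_eq_abs, sq_abs]; ring

lemma L2_const (α : ℝ) (hα : 0 ≤ α) : L2 (fun _ : Fin n => α) = α * Real.sqrt n := by
  unfold L2
  simp only [Real.norm_eq_abs, sq_abs, Finset.sum_const, Finset.card_univ, Fintype.card_fin,
    nsmul_eq_mul]
  rw [Real.sqrt_mul (by positivity), Real.sqrt_sq hα]; ring

lemma L2_ind (B : Finset (Fin n)) :
    L2 (fun j => if j ∈ B then (2:ℝ) else 0) = 2 * Real.sqrt B.card := by
  unfold L2
  have : ∑ j, ‖(if j ∈ B then (2:ℝ) else 0)‖ ^ 2 = 2 ^ 2 * (B.card : ℝ) := by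
    have : ∀ j, ‖(if j ∈ B then (2:ℝ) else 0)‖ ^ 2 = if j ∈ B then (4:ℝ) else 0 := by
      intro j; split_ifs <;> norm_num
    simp only [this]
    rw [Finset.sum_ite_mem]; simp; ring
  rw [this, Real.sqrt_mul (by positivity), Real.sqrt_sq (by norm_num)]

lemma cmp (f : Fin n → E) (g : Fin n → F) (B : Finset (Fin n)) (α β : ℝ) (hα : 0 ≤ α) (hβ : 0 ≤ β)
    (h1 : ∀ j ∈ B, ‖f j‖ ≤ 2) (h2 : ∀ j ∉ B, ‖f j‖ ≤ α + β * ‖g j‖) :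
    L2 f ≤ 2 * Real.sqrt B.card + α * Real.sqrt n + β * L2 g := by
  rw [← L2_ind, ← L2_const α hα, ← L2_real_mul β hβ]
  refine le_trans ?_ (add_le_add_left (L2_add _ _) _)
  refine le_trans ?_ (L2_add _ _)
  apply L2_mono
  intro j
  refine le_trans ?_ (le_abs_self _)
  have : 0 ≤ β * ‖g j‖ := by positivity
  by_cases hj : j ∈ B
  · simp only [hj, if_true]; linarith [h1 j hj]
  · simp only [hj, if_false]; linarith [h2 j hj]

lemma L2_card (f : Fin n → E) (C : Finset (Fin n)) (r : ℝ) (hr : 0 ≤ r)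
    (h : ∀ j ∈ C, r ≤ ‖f j‖) : (C.card : ℝ) * r ^ 2 ≤ L2 f ^ 2 := by
  rw [L2_sq]
  calc (C.card : ℝ) * r ^ 2 = ∑ j ∈ C, r ^ 2 := by simp
    _ ≤ ∑ j ∈ C, ‖f j‖ ^ 2 := Finset.sum_le_sum fun j hj => pow_le_pow_left₀ hr (h j hj) 2
    _ ≤ _ := Finset.sum_le_sum_of_subset_of_nonneg (Finset.subset_univ _) fun _ _ _ => by positivity

lemma L2_entry (f : Fin n → E) (j : Fin n) : ‖f j‖ ≤ L2 f := by
  apply Real.le_sqrt_of_sq_le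
  exact Finset.single_le_sum (f := fun j => ‖f j‖ ^ 2) (fun _ _ => by positivity) (Finset.mem_univ j)

lemma op_scalar (W : Matrix (Fin n) (Fin n) ℂ) (x : Fin n → ℂ) :
    L2 (W.mulVec x) ≤ opNorm W * L2 x := by
  have := (Matrix.toEuclideanCLM (𝕜 := ℂ) (n := Fin n) W).le_opNorm (WithLp.toLp 2 x)
  rw [Matrix.toEuclideanCLM_toLp] at this
  rw [L2_eq, L2_eq]; exact this

lemma op_nonneg (W : Matrix (Fin n) (Fin n) ℂ) : 0 ≤ opNorm W := norm_nonneg _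

lemma op_vec {m : ℕ} (W : Matrix (Fin n) (Fin n) ℂ) (d : Fin n → EuclideanSpace ℂ (Fin m)) :
    L2 (fun j => ∑ k, W j k • d k) ≤ opNorm W * L2 d := by
  have h1 : L2 (fun j => ∑ k, W j k • d k) ^ 2 = ∑ i, L2 (W.mulVec (fun k => d k i)) ^ 2 := by
    simp only [L2_sq, EuclideanSpace.norm_sq_eq]
    rw [Finset.sum_comm]
    simp [Matrix.mulVec, dotProduct]
  have h2 : L2 d ^ 2 = ∑ i, L2 (fun k => d k i) ^ 2 := by
    simp only [L2_sq, EuclideanSpace.norm_sq_eq]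
    rw [Finset.sum_comm]
  apply le_of_sq_le_sq _ (mul_nonneg (op_nonneg _) (L2_nonneg _))
  rw [mul_pow, h1, h2, Finset.mul_sum]
  apply Finset.sum_le_sum
  intro i _
  rw [← mul_pow]
  exact pow_le_pow_left₀ (L2_nonneg _) (op_scalar _ _) 2

lemma norm_cmp [NormedSpace ℝ E] (M N : ℝ) (z w x y : E) (hM : 0 ≤ M)
    (hx : M • z = x) (hy : N • w = y) (hw : ‖w‖ ≤ 1) (hMN : |N - M| ≤ ‖x - y‖) :
    M * ‖z - w‖ ≤ 2 * ‖x - y‖ := by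
  have : M • (z - w) = (x - y) + (N - M) • w := by rw [← hx, ← hy]; module
  have h2 : M * ‖z - w‖ = ‖(x - y) + (N - M) • w‖ := by
    rw [← this, norm_smul, Real.norm_of_nonneg hM]
  rw [h2]
  have h3 : ‖(N - M) • w‖ ≤ ‖x - y‖ := by
    rw [norm_smul, Real.norm_eq_abs]
    nlinarith [abs_nonneg (N-M), norm_nonneg w]
  linarith [norm_add_le (x - y) ((N - M) • w)]

lemma gfun_eq (t : ℝ) (ht : 0 < t) (y : ℂ) : (max ‖y‖ t) • gfun t y = y := by
  unfold gfun
  have : (max ‖y‖ t : ℝ) ≠ 0 := by positivity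
  rw [Complex.real_smul]
  have h2 : ((max ‖y‖ t : ℝ) : ℂ) ≠ 0 := by exact_mod_cast this
  field_simp

lemma gfun_norm (t : ℝ) (ht : 0 < t) (y : ℂ) : ‖gfun t y‖ ≤ 1 := by
  unfold gfun
  rw [norm_div, Complex.norm_real, Real.norm_of_nonneg (by positivity)]
  exact div_le_one_of_le₀ (le_max_left _ _) (by positivity)

lemma max_cmp (t : ℝ) (x y : ℂ) : |max ‖y‖ t - max ‖x‖ t| ≤ ‖x - y‖ := by
  refine (abs_max_sub_max_le_abs _ _ _).trans ?_
  rw [abs_sub_comm]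
  exact abs_norm_sub_norm_le _ _

lemma gfun_lip (t : ℝ) (ht : 0 < t) (x y : ℂ) : t * ‖gfun t x - gfun t y‖ ≤ 2 * ‖x - y‖ := by
  have := norm_cmp _ _ _ _ x y (by positivity) (gfun_eq t ht x) (gfun_eq t ht y) (gfun_norm t ht y)
    (max_cmp t x y)
  nlinarith [le_max_right ‖x‖ t, norm_nonneg (gfun t x - gfun t y)]

lemma gfun_lip' (t : ℝ) (ht : 0 < t) (x y z : ℂ) (hz : ‖x‖ • z = x) (hx : t ≤ ‖x‖) :
    t * ‖z - gfun t y‖ ≤ 2 * ‖x - y‖ := by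
  have := norm_cmp _ _ z _ x y (norm_nonneg _) hz (gfun_eq t ht y) (gfun_norm t ht y)
    (by have := max_cmp t x y; rwa [max_eq_left hx] at this)
  nlinarith [norm_nonneg (z - gfun t y)]

/-- existence of the full fixed point -/
lemma exists_fix (zstar : Fin n → ℂ) (σ : ℝ) (hσ : 0 < σ) (W : Matrix (Fin n) (Fin n) ℂ) (s : ℂ)
    (T : ℝ) (hT : 0 < T) (hWT : 2.8 * (σ * opNorm W) ≤ T) :
    ∃ z : Fin n → ℂ, z = G zstar σ W z s (2 * T) := by
  let f : EuclideanSpace ℂ (Fin n) → EuclideanSpace ℂ (Fin n) :=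
    fun z => WithLp.toLp 2 (G zstar σ W z.ofLp s (2 * T))
  have hf : ContractingWith (1/2) f := by
    refine ⟨by rw [← NNReal.coe_lt_coe]; norm_num, ?_⟩
    apply LipschitzWith.of_dist_le_mul
    intro x y
    rw [dist_eq_norm, dist_eq_norm]
    have e1 : ‖f x - f y‖ = L2 (fun j => G zstar σ W x.ofLp s (2 * T) j - G zstar σ W y.ofLp s (2 * T) j) := by
      rw [L2_eq]; rfl
    have e2 : ‖x - y‖ = L2 (x.ofLp - y.ofLp) := by
      rw [L2_eq]; rfl
    rw [e1, e2]
    have := cmp (fun j => G zstar σ W x.ofLp s (2 * T) j - G zstar σ W y.ofLp s (2 * T) j)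
      (W.mulVec (x.ofLp - y.ofLp)) ∅ 0 (σ / T) le_rfl (by positivity) (by simp) (by
        intro j _
        have := gfun_lip (2 * T) (by positivity) (zstar j * s + (σ : ℂ) * W.mulVec x.ofLp j)
          (zstar j * s + (σ : ℂ) * W.mulVec y.ofLp j)
        have e3 : (zstar j * s + (σ : ℂ) * W.mulVec x.ofLp j) -
          (zstar j * s + (σ : ℂ) * W.mulVec y.ofLp j) = σ * W.mulVec (x.ofLp - y.ofLp) j := by
          rw [Matrix.mulVec_sub]; simp; ring
        rw [e3, norm_mul, Complex.norm_real, Real.norm_of_nonneg hσ.le] at this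
        unfold G
        rw [zero_add, div_mul_eq_mul_div, le_div_iff₀ hT]
        linarith)
    have h2 := op_scalar W (x.ofLp - y.ofLp)
    simp only [Finset.card_empty, Nat.cast_zero, Real.sqrt_zero, mul_zero, zero_mul, zero_add] at this
    refine this.trans ?_
    have h3 : σ / T * L2 (W.mulVec (x.ofLp - y.ofLp)) ≤ σ / T * (opNorm W * L2 (x.ofLp - y.ofLp)) := by
      gcongr
    refine h3.trans ?_
    have h4 : σ / T * opNorm W ≤ 1 / 2 := by
      rw [div_mul_eq_mul_div, div_le_iff₀ hT]
      have := mul_nonneg hσ.le (op_nonneg W)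
      linarith
    have := mul_le_mul_of_nonneg_right h4 (L2_nonneg (x.ofLp - y.ofLp))
    simp only [NNReal.coe_div, NNReal.coe_one, NNReal.coe_ofNat]
    linarith
  refine ⟨(hf.fixedPoint f).ofLp, ?_⟩
  have := hf.fixedPoint_isFixedPt
  exact (congrArg WithLp.ofLp this).symm

/-- leave one out -/
lemma loo (zstar : Fin n → ℂ) (σ : ℝ) (hσ : 0 < σ) (W : Matrix (Fin n) (Fin n) ℂ) (s : ℂ)
    (T : ℝ) (hT : 0 < T) (hWT : 2.8 * (σ * opNorm W) ≤ T) (z z' : Fin n → ℂ) (j : Fin n)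
    (hz : z = G zstar σ W z s (2 * T)) (hz' : z' = G zstar σ (Wminus W j) z' s (2 * T)) :
    σ * ‖W.mulVec z j - W.mulVec z' j‖ ≤ 3 * (σ * opNorm W) := by
  have n1 : ‖z j‖ ≤ 1 := by rw [hz]; exact gfun_norm _ (by positivity) _
  have n2 : ‖z' j‖ ≤ 1 := by rw [hz']; exact gfun_norm _ (by positivity) _
  set d : Fin n → ℂ := fun i => if i = j then 0 else z i - z' i with hd
  have single : ∀ c : ℂ, L2 (fun i => if i = j then c else 0) = ‖c‖ := by
    intro c
    unfold L2
    rw [Finset.sum_eq_single j]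
    · simp
    · intro b _ hb; simp [hb]
    · simp
  set r : Fin n → ℂ := fun i => d i + (if i = j then z j else 0) with hr
  have hLr : L2 r ≤ L2 d + 1 := by
    have := L2_add d (fun i => if i = j then z j else 0)
    rw [single] at this
    linarith
  have key : ∀ i, i ≠ j → W.mulVec z i - (Wminus W j).mulVec z' i = W.mulVec r i := by
    intro i hi
    simp only [Matrix.mulVec, dotProduct]
    rw [← Finset.sum_sub_distrib]
    apply Finset.sum_congr rfl
    intro k _
    by_cases hk : k = j
    · simp [Wminus, hk, hr, hd]
    · simp [Wminus, hk, hr, hd, hi]; ring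
  have := cmp d (W.mulVec r) ∅ 0 (σ / T) le_rfl (by positivity) (by simp) (by
    intro i _
    by_cases hi : i = j
    · simp only [hd, hi, if_true, norm_zero]; positivity
    · simp only [hd, hi, if_false]
      rw [congrFun hz i, congrFun hz' i]
      unfold G
      have := gfun_lip (2 * T) (by positivity) (zstar i * s + (σ : ℂ) * W.mulVec z i)
          (zstar i * s + (σ : ℂ) * (Wminus W j).mulVec z' i)
      have e3 : (zstar i * s + (σ : ℂ) * W.mulVec z i) -
          (zstar i * s + (σ : ℂ) * (Wminus W j).mulVec z' i) = σ * W.mulVec r i := by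
          rw [← key i hi]; ring
      rw [e3, norm_mul, Complex.norm_real, Real.norm_of_nonneg hσ.le] at this
      rw [zero_add, div_mul_eq_mul_div, le_div_iff₀ hT]
      linarith)
  simp only [Finset.card_empty, Nat.cast_zero, Real.sqrt_zero, mul_zero, zero_mul, zero_add] at this
  rw [div_mul_eq_mul_div, le_div_iff₀ hT] at this
  have h2 := op_scalar W r
  have hω : 0 ≤ σ * opNorm W := mul_nonneg hσ.le (op_nonneg W)
  have h3 : σ * L2 (W.mulVec r) ≤ (σ * opNorm W) * (L2 d + 1) := by
    calc _ ≤ σ * (opNorm W * L2 r) := by gcongr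
      _ ≤ σ * (opNorm W * (L2 d + 1)) := by
        have := op_nonneg W
        gcongr
      _ = _ := by ring
  have hd1 : L2 d ≤ 1 := by
    by_contra hcon
    push Not at hcon
    nlinarith
  have e : W.mulVec z j - W.mulVec z' j = W.mulVec (fun i => z i - z' i) j := by
    rw [← Pi.sub_apply, ← Matrix.mulVec_sub]; rfl
  have h4 : L2 (fun i => z i - z' i) ≤ 3 := by
    have := L2_add d (fun i => if i = j then z j - z' j else 0)
    rw [single] at this
    have e2 : (fun i => d i + (if i = j then z j - z' j else 0)) = fun i => z i - z' i := by
      funext i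
      by_cases hi : i = j
      · simp [hd, hi]
      · simp [hd, hi]
    rw [e2] at this
    linarith [norm_sub_le (z j) (z' j)]
  rw [e]
  have h5 := L2_entry (W.mulVec (fun i => z i - z' i)) j
  have h6 := op_scalar W (fun i => z i - z' i)
  have := op_nonneg W
  calc _ ≤ σ * (opNorm W * 3) := by
        gcongr
        exact h5.trans (h6.trans (by gcongr))
    _ = _ := by ring

/-- Counting the bad set. -/
lemma count_bad (zstar : Fin n → ℂ) (hzs : ∀ j, ‖zstar j‖ = 1) (σ : ℝ) (hσ : 0 < σ)
    (W : Matrix (Fin n) (Fin n) ℂ) (T : ℝ) (hT : 0 < T) (hWT : 2.8 * (σ * opNorm W) ≤ T)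
    (s sk h : ℝ) (hs : |s - sk| ≤ h) (hs0 : 0 ≤ s)
    (zh : Fin n → ℂ) (hz1 : ∀ j, ‖zh j‖ = 1)
    (x : Fin n → ℂ) (hx : ∀ j, x j = zstar j * s + σ * W.mulVec zh j)
    (hz2 : ∀ j, ‖x j‖ • zh j = x j)
    (zl : Fin n → Fin n → ℂ)
    (hzl : ∀ j, zl j = G zstar σ (Wminus W j) (zl j) (sk : ℂ) (2 * T))
    (A : Finset (Fin n))
    (hA : ∀ j, σ * ‖W.mulVec (zl j) j‖ > s - 4 * T - 3 * (σ * opNorm W) → j ∈ A)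
    (B : Finset (Fin n)) (hB : ∀ j, j ∈ B ↔ ‖x j‖ < 2 * T)
    (H : ℝ) (hH : H = h * Real.sqrt n / T) :
    (B.card : ℝ) ≤ A.card + 0.6175 * B.card + 0.1545 * H ^ 2 := by
  obtain ⟨z, hz⟩ := exists_fix zstar σ hσ W sk T hT hWT
  have hh : 0 ≤ h := (abs_nonneg _).trans hs
  have hω : 0 ≤ σ * opNorm W := mul_nonneg hσ.le (op_nonneg W)
  set e : Fin n → ℂ := zh - z with he
  have nz : ∀ j, ‖z j‖ ≤ 1 := fun j => by rw [hz]; exact gfun_norm _ (by positivity) _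
  have h1 := cmp e (W.mulVec e) B (h / T) (σ / T) (by positivity) (by positivity)
    (by intro j _
        have := norm_sub_le (zh j) (z j)
        simp only [he, Pi.sub_apply]
        linarith [nz j, hz1 j])
    (by intro j hj
        rw [hB] at hj; push Not at hj
        have := gfun_lip' (2 * T) (by positivity) (x j) (zstar j * sk + σ * W.mulVec z j) (zh j)
          (hz2 j) hj
        have e1 : gfun (2 * T) (zstar j * sk + σ * W.mulVec z j) = z j := (congrFun hz j).symm
        have e2 : x j - (zstar j * sk + σ * W.mulVec z j) = zstar j * ((s - sk : ℝ) : ℂ)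
          + σ * W.mulVec e j := by
          rw [hx, he, Matrix.mulVec_sub]
          simp only [Pi.sub_apply, Complex.ofReal_sub]; ring
        rw [e1, e2] at this
        have h3 := norm_add_le (zstar j * ((s - sk : ℝ) : ℂ)) (σ * W.mulVec e j)
        rw [norm_mul, norm_mul, hzs, Complex.norm_real, Complex.norm_real, Real.norm_of_nonneg hσ.le,
          Real.norm_eq_abs] at h3
        have e4 : h / T + σ / T * ‖W.mulVec e j‖ = (h + σ * ‖W.mulVec e j‖) / T := by ring
        rw [e4, le_div_iff₀ hT]
        have e9 : e j = zh j - z j := rfl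
        rw [e9]
        linarith)
  have h2 := op_scalar W e
  have hLe := L2_nonneg e
  set b := Real.sqrt B.card with hb
  have hb0 : 0 ≤ b := Real.sqrt_nonneg _
  have hbb : b ^ 2 = B.card := Real.sq_sqrt (Nat.cast_nonneg _)
  have hH0 : 0 ≤ H := by rw [hH]; positivity
  have h3 : L2 e * T ≤ (2 * b + H) * T + (σ * opNorm W) * L2 e := by
    have e5 : h / T * Real.sqrt n = H := by rw [hH]; ring
    rw [e5] at h1
    have e6 : σ / T * L2 (W.mulVec e) * T = σ * L2 (W.mulVec e) := by field_simp
    have := mul_le_mul_of_nonneg_right h1 hT.le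
    have e7 := mul_le_mul_of_nonneg_left h2 hσ.le
    nlinarith
  have h4 : 1.8 * L2 e ≤ 2.8 * (2 * b + H) := by
    have : (1.8 * L2 e) * T ≤ (2.8 * (2 * b + H)) * T := by nlinarith
    exact le_of_mul_le_mul_right this hT
  have h5 : σ * L2 (W.mulVec e) ≤ T * (2 * b + H) / 1.8 := by
    have e7 := mul_le_mul_of_nonneg_left h2 hσ.le
    rw [le_div_iff₀ (by norm_num)]
    nlinarith
  set C := B.filter (fun j => 2 * T < σ * ‖W.mulVec e j‖) with hC
  have h6 : (C.card : ℝ) ≤ 0.6175 * B.card + 0.1545 * H ^ 2 := by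
    have := L2_card (W.mulVec e) C (2 * T / σ) (by positivity) (by
      intro j hj
      rw [hC, Finset.mem_filter] at hj
      rw [div_le_iff₀ hσ]; linarith [hj.2])
    have e8 : (C.card : ℝ) * (2 * T) ^ 2 ≤ (σ * L2 (W.mulVec e)) ^ 2 := by
      have e9 : (2 * T / σ) ^ 2 = (2 * T) ^ 2 / σ ^ 2 := by ring
      rw [e9, ← mul_div_assoc, div_le_iff₀ (by positivity)] at this
      linarith
    have e10 : (σ * L2 (W.mulVec e)) ^ 2 ≤ (T * (2 * b + H) / 1.8) ^ 2 :=
      pow_le_pow_left₀ (mul_nonneg hσ.le (L2_nonneg _)) h5 2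
    have e11 : (C.card : ℝ) * T ^ 2 ≤ ((2 * b + H) ^ 2 / 12.96) * T ^ 2 := by
      have : (T * (2 * b + H) / 1.8) ^ 2 = 4 * (((2 * b + H) ^ 2 / 12.96) * T ^ 2) := by ring
      linarith
    have e12 := le_of_mul_le_mul_right e11 (by positivity)
    rw [← hbb]
    have e13 : (2 * b + H) ^ 2 ≤ 8 * b ^ 2 + 2 * H ^ 2 := by nlinarith [sq_nonneg (2 * b - H)]
    rw [le_div_iff₀ (by norm_num)] at e12
    nlinarith [sq_nonneg b, sq_nonneg H]
  have h7 : B ⊆ A ∪ C := by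
    intro j hj
    rw [Finset.mem_union]
    by_cases hjC : j ∈ C
    · exact Or.inr hjC
    · left
      have hc : σ * ‖W.mulVec e j‖ ≤ 2 * T := by
        by_contra hcon
        push Not at hcon
        exact hjC (by rw [hC, Finset.mem_filter]; exact ⟨hj, hcon⟩)
      apply hA
      have hl := loo zstar σ hσ W sk T hT hWT z (zl j) j hz (hzl j)
      have hxj := (hB j).1 hj
      have k1 : s ≤ ‖x j‖ + σ * ‖W.mulVec zh j‖ := by
        have : zstar j * (s:ℂ) = x j - σ * W.mulVec zh j := by rw [hx]; ring
        have k2 := norm_sub_le (x j) (σ * W.mulVec zh j)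
        rw [← this, norm_mul, norm_mul, hzs, Complex.norm_real, Complex.norm_real,
          Real.norm_of_nonneg hσ.le, Real.norm_of_nonneg hs0] at k2
        linarith
      have k3 : ‖W.mulVec zh j‖ ≤ ‖W.mulVec e j‖ + ‖W.mulVec z j - W.mulVec (zl j) j‖
          + ‖W.mulVec (zl j) j‖ := by
        have : W.mulVec zh j = W.mulVec e j + (W.mulVec z j - W.mulVec (zl j) j)
            + W.mulVec (zl j) j := by
          rw [he, Matrix.mulVec_sub]; simp
        rw [this]
        exact norm_add₃_le
      have k4 := mul_le_mul_of_nonneg_left k3 hσ.le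
      linarith
  have h8 : (B.card : ℝ) ≤ A.card + C.card := by
    exact_mod_cast (Finset.card_le_card h7).trans (Finset.card_union_le _ _)
  linarith

end aux
section aux2
variable {n : ℕ} {E : Type*} [NormedAddCommGroup E] [InnerProductSpace ℂ E]

lemma sum_expand (v : Fin n → E) (z : Fin n → ℂ) (c : E) (hv : ∀ j, ‖v j‖ = 1)
    (hz : ∀ j, ‖z j‖ = 1) (hc : ‖c‖ = 1) :
    L2 (fun j => v j - z j • c) ^ 2
      = 2 * n - 2 * (inner ℂ c (∑ j, (starRingEnd ℂ) (z j) • v j)).re := by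
  rw [L2_sq, inner_sum, Complex.re_sum]
  have : ∀ j, ‖v j - z j • c‖ ^ 2 = 2 - 2 * (inner ℂ c ((starRingEnd ℂ) (z j) • v j)).re := by
    intro j
    rw [@norm_sub_sq ℂ, norm_smul, hv, hz, hc]
    have : RCLike.re (inner ℂ (v j) (z j • c)) = (inner ℂ c ((starRingEnd ℂ) (z j) • v j)).re := by
      rw [← inner_conj_symm, inner_smul_left, inner_smul_right]
      exact Complex.conj_re _
    rw [this]; norm_num; ring
  simp only [this]
  rw [Finset.sum_sub_distrib, ← Finset.mul_sum]
  simp only [Finset.sum_const, Finset.card_univ, Fintype.card_fin, nsmul_eq_mul]; ring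

lemma sum_ge (v : Fin n → E) (z : Fin n → ℂ) (c : E) (hv : ∀ j, ‖v j‖ = 1)
    (hz : ∀ j, ‖z j‖ = 1) (hc : ‖c‖ = 1) :
    2 * n - 2 * ‖∑ j, (starRingEnd ℂ) (z j) • v j‖ ≤ L2 (fun j => v j - z j • c) ^ 2 := by
  rw [sum_expand v z c hv hz hc]
  have h1 := (Complex.re_le_norm _).trans (norm_inner_le_norm (𝕜 := ℂ) c (∑ j, (starRingEnd ℂ) (z j) • v j))
  rw [hc, one_mul] at h1
  linarith

lemma sum_eq (v : Fin n → E) (z : Fin n → ℂ) (s : ℝ) (c : E) (hv : ∀ j, ‖v j‖ = 1)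
    (hz : ∀ j, ‖z j‖ = 1) (hc : ‖c‖ = 1) (hb : ∑ j, (starRingEnd ℂ) (z j) • v j = (s : ℂ) • c) :
    L2 (fun j => v j - z j • c) ^ 2 = 2 * n - 2 * s := by
  rw [sum_expand v z c hv hz hc, hb, inner_smul_right, inner_self_eq_norm_sq_to_K, hc]
  simp

lemma loss1_ge (hn : 1 ≤ n) (v z : Fin n → ℂ) (hv : ∀ j, ‖v j‖ = 1) (hz : ∀ j, ‖z j‖ = 1) :
    2 * n - 2 * ‖∑ j, (starRingEnd ℂ) (z j) • v j‖ ≤ n * loss1 v z := by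
  have hn' : (0:ℝ) < n := by exact_mod_cast hn
  rw [mul_comm (n:ℝ) (loss1 v z), ← div_le_iff₀ hn']
  unfold loss1
  apply le_csInf
  · exact ⟨_, 1, by simp, rfl⟩
  · rintro r ⟨a, ha, rfl⟩
    have := sum_ge v z a hv hz ha
    have e : enorm (v - a • z) = L2 (fun j => v j - z j • a) := by
      unfold enorm L2
      congr 1
      apply Finset.sum_congr rfl
      intro j _
      simp [mul_comm]
    rw [e]
    gcongr

/-- conjugated columns -/
def cc {m : ℕ} (V : Matrix (Fin m) (Fin n) ℂ) (j : Fin n) : EuclideanSpace ℂ (Fin m) :=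
  WithLp.toLp 2 (fun i => (starRingEnd ℂ) (V i j))

lemma fnorm_eq {m : ℕ} (V : Matrix (Fin m) (Fin n) ℂ) (z : Fin n → ℂ) (a : Fin m → ℂ) :
    fnorm (V - Matrix.vecMulVec a (star z)) ^ 2 =
      L2 (fun j => cc V j - z j • WithLp.toLp 2 (fun i => (starRingEnd ℂ) (a i))) ^ 2 := by
  unfold fnorm
  rw [Real.sq_sqrt (by positivity), L2_sq, Finset.sum_comm]
  apply Finset.sum_congr rfl
  intro j _
  rw [EuclideanSpace.norm_sq_eq]
  apply Finset.sum_congr rfl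
  intro i _
  rw [← Complex.norm_conj]
  simp [cc, Matrix.vecMulVec_apply, mul_comm]

lemma enorm_conj {m : ℕ} (a : Fin m → ℂ) :
    ‖(WithLp.toLp 2 (fun i => (starRingEnd ℂ) (a i)) : EuclideanSpace ℂ (Fin m))‖ = enorm a := by
  rw [EuclideanSpace.norm_eq]; simp [enorm]

lemma lossM_ge {m : ℕ} (hn : 1 ≤ n) (hm : 2 ≤ m) (V : Matrix (Fin m) (Fin n) ℂ) (z : Fin n → ℂ)
    (hv : ∀ j, ‖cc V j‖ = 1) (hz : ∀ j, ‖z j‖ = 1) :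
    2 * n - 2 * ‖∑ j, (starRingEnd ℂ) (z j) • cc V j‖ ≤ n * lossM V z := by
  have hn' : (0:ℝ) < n := by exact_mod_cast hn
  rw [mul_comm (n:ℝ) (lossM V z), ← div_le_iff₀ hn']
  unfold lossM
  apply le_csInf
  · refine ⟨_, fun i => if i = ⟨0, by omega⟩ then 1 else 0, ?_, rfl⟩
    unfold enorm
    rw [Finset.sum_eq_single ⟨0, by omega⟩]
    · simp
    · intro b _ hb; simp [hb]
    · simp
  · rintro r ⟨a, ha, rfl⟩
    rw [fnorm_eq]
    have := sum_ge (cc V) z _ hv hz ((enorm_conj a).trans ha)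
    gcongr

lemma lossM_le {m : ℕ} (V : Matrix (Fin m) (Fin n) ℂ) (z : Fin n → ℂ) (a : Fin m → ℂ)
    (ha : enorm a = 1) : lossM V z ≤
      L2 (fun j => cc V j - z j • WithLp.toLp 2 (fun i => (starRingEnd ℂ) (a i))) ^ 2 / n := by
  rw [← fnorm_eq]
  unfold lossM
  apply csInf_le
  · refine ⟨0, ?_⟩
    rintro r ⟨a, _, rfl⟩
    positivity
  · exact ⟨a, ha, rfl⟩

lemma F1_fix (Y : Matrix (Fin n) (Fin n) ℂ) (z : Fin n → ℂ) (h : z = F1 Y z) (j : Fin n) :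
    ‖Y.mulVec z j‖ • z j = Y.mulVec z j := by
  by_cases h0 : Y.mulVec z j = 0
  · rw [h0]; simp
  · have := congrFun h j
    rw [this]
    simp only [F1, h0, ne_eq, not_false_eq_true, if_true, Complex.real_smul]
    have h2 : ((‖Y.mulVec z j‖ : ℝ) : ℂ) ≠ 0 := by simpa using h0
    field_simp

lemma Fm_fix {m : ℕ} (Y : Matrix (Fin n) (Fin n) ℂ) (V : Matrix (Fin m) (Fin n) ℂ)
    (h : V = Fm Y V) (j : Fin n) :
    ‖∑ k, Y j k • cc V k‖ • cc V j = ∑ k, Y j k • cc V k := by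
  have e : ∑ k, Y j k • cc V k =
      WithLp.toLp 2 (fun i => (starRingEnd ℂ) (col (V * Yᴴ) j i)) := by
    ext i
    simp [cc, col, Matrix.mul_apply, mul_comm]
  rw [e, enorm_conj]
  by_cases h0 : col (V * Yᴴ) j = 0
  · rw [h0]
    have : enorm (0 : Fin m → ℂ) = 0 := by simp [enorm]
    rw [this]
    ext i
    simp
  · have hne : enorm (col (V * Yᴴ) j) ≠ 0 := by
      rw [← enorm_conj]
      intro h1
      apply h0
      rw [norm_eq_zero] at h1
      funext i
      have := congrArg (fun w : EuclideanSpace ℂ (Fin m) => w i) h1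
      simpa using this
    ext i
    have h1 : V i j = col (V * Yᴴ) j i / ((enorm (col (V * Yᴴ) j) : ℝ) : ℂ) := by
      have := congrFun (congrFun h i) j
      change V i j = (V * Yᴴ) i j / ((enorm (col (V * Yᴴ) j) : ℝ) : ℂ)
      simpa only [Fm, Matrix.of_apply, ne_eq, h0, not_false_eq_true, if_true] using this
    have h2 : ((enorm (col (V * Yᴴ) j) : ℝ) : ℂ) ≠ 0 := by exact_mod_cast hne
    simp only [cc, PiLp.smul_apply, Complex.real_smul]
    rw [h1, map_div₀, Complex.conj_ofReal]
    field_simp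

set_option maxHeartbeats 1000000 in
/-- comparison of the two solutions -/
lemma compare {m : ℕ} (zstar : Fin n → ℂ) (hzs : ∀ j, ‖zstar j‖ = 1) (σ : ℝ) (hσ : 0 < σ)
    (W : Matrix (Fin n) (Fin n) ℂ) (T ε : ℝ) (hε : 0 ≤ ε) (hT : 0 < T)
    (hWT : 2.8 * (ε * n + σ * opNorm W) ≤ T)
    (s s' : ℝ)
    (zh : Fin n → ℂ) (hz1 : ∀ j, ‖zh j‖ = 1)
    (x : Fin n → ℂ) (hx : ∀ j, x j = zstar j * s + σ * W.mulVec zh j)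
    (hz2 : ∀ j, ‖x j‖ • zh j = x j)
    (B : Finset (Fin n)) (hB : ∀ j, j ∈ B ↔ ‖x j‖ < 2 * T)
    (v : Fin n → EuclideanSpace ℂ (Fin m)) (c : EuclideanSpace ℂ (Fin m)) (hc : ‖c‖ = 1)
    (hv : ∀ j, ‖v j‖ = 1) (u : Fin n → EuclideanSpace ℂ (Fin m))
    (hu : ∀ j, u j = (zstar j * s') • c + (σ : ℂ) • ∑ k, W j k • v k)
    (hv2 : ∀ j, ‖u j‖ • v j = u j)
    (hsz : ∑ j, (starRingEnd ℂ) (zstar j) • zh j = (s : ℂ))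
    (hsv : ∑ j, (starRingEnd ℂ) (zstar j) • v j = (s' : ℂ) • c)
    (hs : 2 * n - 2 * s ≤ n * ε ^ 2) (hs' : 2 * n - 2 * s' ≤ n * ε ^ 2) :
    L2 (fun j => zh j • c - v j) ^ 2 ≤ 9.7 * B.card := by
  set d : Fin n → EuclideanSpace ℂ (Fin m) := fun j => zh j • c - v j with hd
  set D := L2 d with hD
  have hD0 : 0 ≤ D := L2_nonneg _
  set P := L2 (fun j => v j - zstar j • c) with hP
  set Q := L2 (fun j => zh j • c - zstar j • c) with hQ
  have hP0 : 0 ≤ P := L2_nonneg _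
  have hQ0 : 0 ≤ Q := L2_nonneg _
  have hP2 : P ^ 2 = 2 * n - 2 * s' := sum_eq v zstar s' c hv hzs hc hsv
  have hQ2 : Q ^ 2 = 2 * n - 2 * s := by
    apply sum_eq (fun j => zh j • c) zstar s c _ hzs hc
    · rw [← hsz, Finset.sum_smul]
      apply Finset.sum_congr rfl
      intro j _
      simp [smul_smul]
    · intro j; rw [norm_smul, hz1, hc, one_mul]
  set r := Real.sqrt n with hr
  have hr0 : 0 ≤ r := Real.sqrt_nonneg _
  have hrr : r ^ 2 = n := Real.sq_sqrt (by positivity)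
  have hPe : P ≤ ε * r := abs_le_of_sq_le_sq' (by rw [hP2, mul_pow, hrr]; linarith) (by positivity) |>.2
  have hQe : Q ≤ ε * r := abs_le_of_sq_le_sq' (by rw [hQ2, mul_pow, hrr]; linarith) (by positivity) |>.2
  have hPQ : Q ≤ P + D := by
    have := L2_add (fun j => v j - zstar j • c) d
    simp only [hd] at this
    have e : (fun j => v j - zstar j • c + (zh j • c - v j)) = fun j => zh j • c - zstar j • c := by
      funext j; abel
    rw [e] at this
    exact this
  have hDs : L2 (fun j => v j - zh j • c) = D := by
    rw [hD]; unfold L2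
    simp only [hd, norm_sub_rev]
  have hQP : P ≤ Q + D := by
    have := L2_add (fun j => zh j • c - zstar j • c) (fun j => v j - zh j • c)
    have e : (fun j => zh j • c - zstar j • c + (v j - zh j • c)) = fun j => v j - zstar j • c := by
      funext j; abel
    rw [e, hDs] at this
    exact this
  have hss : |s - s'| ≤ ε * r * D := by
    rw [abs_le]
    constructor <;> nlinarith
  have h1 := cmp d (fun j => ∑ k, W j k • d k) B (ε * r * D / T) (σ / T) (by positivity) (by positivity)
    (by intro j _
        have := norm_sub_le (zh j • c) (v j)
        rw [norm_smul, hz1, hc, hv] at this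
        simp only [hd]
        linarith)
    (by intro j hj
        rw [hB] at hj; push Not at hj
        have hxc : ‖x j • c‖ = ‖x j‖ := by rw [norm_smul, hc, mul_one]
        have := norm_cmp (‖x j‖) (‖u j‖) (zh j • c) (v j) (x j • c) (u j) (norm_nonneg _)
          (by rw [← smul_assoc, hz2]) (hv2 j) (hv j).le
          (by have := abs_norm_sub_norm_le (u j) (x j • c)
              rwa [hxc, norm_sub_rev] at this)
        have e2 : x j • c - u j = (zstar j * ((s - s' : ℝ) : ℂ)) • c
          + (σ : ℂ) • ∑ k, W j k • d k := by
          have e3 : ∑ k, W j k • d k = W.mulVec zh j • c - ∑ k, W j k • v k := by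
            simp only [hd, smul_sub, Finset.sum_sub_distrib, Matrix.mulVec, dotProduct,
              Finset.sum_smul, smul_smul]
          rw [hx, hu, e3]
          push_cast
          module
        rw [e2] at this
        have h3 := norm_add_le ((zstar j * ((s - s' : ℝ) : ℂ)) • c) ((σ : ℂ) • ∑ k, W j k • d k)
        rw [norm_smul, norm_smul, norm_mul, hzs, hc, Complex.norm_real, Complex.norm_real,
          Real.norm_of_nonneg hσ.le, Real.norm_eq_abs] at h3
        have e4 : ε * r * D / T + σ / T * ‖∑ k, W j k • d k‖
          = (ε * r * D + σ * ‖∑ k, W j k • d k‖) / T := by ring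
        rw [e4, le_div_iff₀ hT]
        have e9 : d j = zh j • c - v j := rfl
        rw [← e9] at this
        nlinarith [norm_nonneg (d j)])
  have h2 := op_vec W d
  set b := Real.sqrt B.card with hb
  have hb0 : 0 ≤ b := Real.sqrt_nonneg _
  have hbb : b ^ 2 = B.card := Real.sq_sqrt (Nat.cast_nonneg _)
  have h3 : D * T ≤ 2 * b * T + (ε * n + σ * opNorm W) * D := by
    have e6 : σ / T * L2 (fun j => ∑ k, W j k • d k) * T = σ * L2 (fun j => ∑ k, W j k • d k) := by
      field_simp
    have e5 : ε * r * D / T * r * T = ε * n * D := by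
      rw [← hrr]; field_simp
    have := mul_le_mul_of_nonneg_right h1 hT.le
    have e7 := mul_le_mul_of_nonneg_left h2 hσ.le
    rw [add_mul, add_mul, e6, e5] at this
    linarith
  have h4 : 1.8 * D ≤ 5.6 * b := by
    have : (1.8 * D) * T ≤ (5.6 * b) * T := by nlinarith
    exact le_of_mul_le_mul_right this hT
  rw [← hbb]
  nlinarith
end aux2
set_option maxHeartbeats 2000000 in
theorem stmt2 {n m : ℕ} (hn : 1 ≤ n) (hm : 2 ≤ m)
    (zstar : Fin n → ℂ) (hzstar : ∀ j, ‖zstar j‖ = 1)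
    (σ : ℝ) (hσ : 0 < σ) (W : Matrix (Fin n) (Fin n) ℂ) (hW : W.IsHermitian)
    (Y : Matrix (Fin n) (Fin n) ℂ)
    (hY : Y = Matrix.vecMulVec zstar (star zstar) + (σ : ℂ) • W)
    (ε : ℝ) (hε : 0 < ε ∧ ε < 1 / 2) (h : ℝ) (hh : 0 < h)
    (δ : ℝ) (hδ : 2 * Real.sqrt 2 * (6 * ε + σ * opNorm W / n) ≤ δ)
    (zhat : Fin n → ℂ) (hzhat1 : ∀ j, ‖zhat j‖ = 1)
    (hzhat2 : zhat = F1 Y zhat) (hzhat3 : loss1 zhat zstar ≤ ε ^ 2)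
    (Vhat : Matrix (Fin m) (Fin n) ℂ) (hVhat1 : ∀ j, enorm (col Vhat j) = 1)
    (hVhat2 : Vhat = Fm Y Vhat) (hVhat3 : lossM Vhat zstar ≤ ε ^ 2)
    (zlo : ℕ → Fin n → (Fin n → ℂ))
    (hzlo : ∀ k ≤ Nat.ceil ((n : ℝ) * ε / h), ∀ j : Fin n,
      (∀ i, ‖zlo k j i‖ ≤ 1) ∧
      zlo k j = G zstar σ (Wminus W j) (zlo k j) (((n : ℝ) - (k : ℝ) * h : ℝ) : ℂ)
        (2 * δ * n)) :
    lossM Vhat zhat ≤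
      72 * (∑ k ∈ Finset.range (Nat.ceil ((n : ℝ) * ε / h) + 1),
        (1 / (n : ℝ)) * ∑ j : Fin n, ind (σ * ‖W.mulVec (zlo k j) j‖ >
          (1 - ε - 4 * δ - 3 * σ * opNorm W / n) * n - h)) +
      (72 * h ^ 2 / (δ ^ 2 * (n : ℝ) ^ 2)) * ind (h > δ * Real.sqrt n) := by
  have hn' : (0:ℝ) < n := by exact_mod_cast hn
  obtain ⟨hε0, hε1⟩ := hε
  have hop := op_nonneg W
  have hω : 0 ≤ σ * opNorm W := mul_nonneg hσ.le hop
  have h28 : (2.8 : ℝ) ≤ 2 * Real.sqrt 2 := by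
    have : (1.4 : ℝ) ≤ Real.sqrt 2 := Real.le_sqrt_of_sq_le (by norm_num)
    linarith
  have hδ1 : 2.8 * (6 * ε + σ * opNorm W / n) ≤ δ := by
    refine le_trans ?_ hδ
    gcongr
  have hδ0 : 0 < δ := by
    have : 0 ≤ σ * opNorm W / n := by positivity
    linarith
  set T : ℝ := δ * n with hTdef
  have hT : 0 < T := by positivity
  have hWT0 : 2.8 * (6 * (ε * n) + σ * opNorm W) ≤ T := by
    have := mul_le_mul_of_nonneg_right hδ1 hn'.le
    have e : 2.8 * (6 * ε + σ * opNorm W / n) * n = 2.8 * (6 * (ε * n) + σ * opNorm W) := by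
      field_simp
    linarith
  have hεn : 0 < ε * n := by positivity
  set p : ℂ := ∑ j, (starRingEnd ℂ) (zstar j) • zhat j with hp
  set s : ℝ := ‖p‖ with hsdef
  have hs : 2 * n - 2 * s ≤ n * ε ^ 2 :=
    (loss1_ge hn zhat zstar hzhat1 hzstar).trans (by gcongr)
  have hε2 : ε ^ 2 ≤ ε := by nlinarith
  have hs0 : 0 < s := by nlinarith
  have hsn : s ≤ n := by
    refine (norm_sum_le _ _).trans ?_
    have : ∀ j, ‖(starRingEnd ℂ) (zstar j) • zhat j‖ = 1 := by
      intro j; rw [norm_smul, Complex.norm_conj, hzstar, hzhat1, one_mul]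
    simp only [this]; simp
  set w : ℂ := (starRingEnd ℂ) p / s with hw
  have hsC : (s : ℂ) ≠ 0 := by exact_mod_cast hs0.ne'
  have hwn : ‖w‖ = 1 := by
    rw [hw, norm_div, Complex.norm_conj, Complex.norm_real, Real.norm_of_nonneg hs0.le]
    exact div_self hs0.ne'
  have hwp : w * p = s := by
    rw [hw, div_mul_eq_mul_div, mul_comm, Complex.mul_conj, Complex.normSq_eq_norm_sq]
    rw [div_eq_iff hsC]; push_cast; ring
  set zh : Fin n → ℂ := fun j => w * zhat j with hzh
  have hz1 : ∀ j, ‖zh j‖ = 1 := by intro j; simp only [hzh]; rw [norm_mul, hwn, hzhat1, one_mul]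
  have hsz : ∑ j, (starRingEnd ℂ) (zstar j) • zh j = (s : ℂ) := by
    rw [← hwp, hp, Finset.mul_sum]
    apply Finset.sum_congr rfl
    intro j _
    simp only [hzh, smul_eq_mul]; ring
  set x : Fin n → ℂ := fun j => w * Y.mulVec zhat j with hxdef
  have hx : ∀ j, x j = zstar j * s + σ * W.mulVec zh j := by
    intro j
    have e1 : Y.mulVec zhat j = zstar j * p + σ * W.mulVec zhat j := by
      rw [hY, hp]
      simp only [Matrix.mulVec, dotProduct, Matrix.add_apply, Matrix.smul_apply,
        Matrix.vecMulVec_apply, Pi.star_apply, RCLike.star_def, smul_eq_mul, Finset.mul_sum]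
      rw [← Finset.sum_add_distrib]
      apply Finset.sum_congr rfl
      intro k _
      ring
    have e2 : W.mulVec zh j = w * W.mulVec zhat j := by
      have : zh = w • zhat := rfl
      rw [this, Matrix.mulVec_smul]; rfl
    simp only [hxdef]
    rw [e1, e2, ← hwp]; ring
  have hz2 : ∀ j, ‖x j‖ • zh j = x j := by
    intro j
    have := F1_fix Y zhat hzhat2 j
    have e : ‖x j‖ = ‖Y.mulVec zhat j‖ := by simp only [hxdef]; rw [norm_mul, hwn, one_mul]
    rw [e]
    simp only [hzh, hxdef]
    rw [← mul_smul_comm, this]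
  have hv : ∀ j, ‖cc Vhat j‖ = 1 := by
    intro j
    rw [← hVhat1 j]; exact enorm_conj (col Vhat j)
  set b : EuclideanSpace ℂ (Fin m) := ∑ j, (starRingEnd ℂ) (zstar j) • cc Vhat j with hb
  set s' : ℝ := ‖b‖ with hs'def
  have hs' : 2 * n - 2 * s' ≤ n * ε ^ 2 :=
    (lossM_ge hn hm Vhat zstar hv hzstar).trans (by gcongr)
  have hs'0 : 0 < s' := by nlinarith
  have hs'C : (s' : ℂ) ≠ 0 := by exact_mod_cast hs'0.ne'
  set c : EuclideanSpace ℂ (Fin m) := ((s' : ℂ)⁻¹) • b with hc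
  have hbc : b = (s' : ℂ) • c := by rw [hc, smul_smul, mul_inv_cancel₀ hs'C, one_smul]
  have hcn : ‖c‖ = 1 := by
    rw [hc, norm_smul, norm_inv, Complex.norm_real, Real.norm_of_nonneg hs'0.le]
    exact inv_mul_cancel₀ hs'0.ne'
  have hu : ∀ j, ∑ k, Y j k • cc Vhat k =
      (zstar j * s') • c + (σ : ℂ) • ∑ k, W j k • cc Vhat k := by
    intro j
    rw [mul_smul, ← hbc, hb, hY, Finset.smul_sum, Finset.smul_sum, ← Finset.sum_add_distrib]
    apply Finset.sum_congr rfl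
    intro k _
    simp only [Matrix.add_apply, Matrix.smul_apply,
        Matrix.vecMulVec_apply, Pi.star_apply, RCLike.star_def, smul_eq_mul]
    module
  set B : Finset (Fin n) := Finset.univ.filter (fun j => ‖x j‖ < 2 * T) with hBdef
  have hB : ∀ j, j ∈ B ↔ ‖x j‖ < 2 * T := by intro j; simp [hBdef]
  have hD := compare zstar hzstar σ hσ W T ε hε0.le hT (by linarith) s s' zh hz1 x hx hz2 B hB
    (cc Vhat) c hcn hv (fun j => ∑ k, Y j k • cc Vhat k) hu (Fm_fix Y Vhat hVhat2) hsz hbc hs hs'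
  have hloss : lossM Vhat zhat ≤ 9.7 * B.card / n := by
    have ha : enorm (fun i => (starRingEnd ℂ) (w * c i)) = 1 := by
      have : (‖w • c‖ : ℝ) = 1 := by rw [norm_smul, hwn, hcn, one_mul]
      rw [EuclideanSpace.norm_eq] at this
      unfold enorm
      simpa using this
    refine (lossM_le Vhat zhat _ ha).trans ?_
    have e : L2 (fun j => cc Vhat j - zhat j • (WithLp.toLp 2 (fun i => (starRingEnd ℂ)
        ((starRingEnd ℂ) (w * c i))) : EuclideanSpace ℂ (Fin m)))
        = L2 (fun j => zh j • c - cc Vhat j) := by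
      unfold L2
      congr 1
      apply Finset.sum_congr rfl
      intro j _
      rw [norm_sub_rev]
      congr 3
      ext i
      simp [hzh]; ring
    rw [e]
    gcongr
  set N := Nat.ceil ((n : ℝ) * ε / h) with hN
  set k := Nat.floor (((n : ℝ) - s) / h) with hk
  have hns : 0 ≤ ((n : ℝ) - s) / h := div_nonneg (by linarith) hh.le
  have hkN : k ≤ N := by
    have h1 : ((n : ℝ) - s) / h ≤ n * ε / h := by
      gcongr
      nlinarith
    exact (Nat.floor_le_floor h1).trans (Nat.floor_le_ceil _)
  have hsk : |s - ((n : ℝ) - (k : ℝ) * h)| ≤ h := by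
    have h1 := Nat.floor_le hns
    have h2 := (Nat.lt_floor_add_one (((n : ℝ) - s) / h)).le
    rw [← hk] at h1 h2
    rw [le_div_iff₀ hh] at h1
    rw [div_le_iff₀ hh] at h2
    rw [abs_le]; constructor <;> nlinarith
  set A : Finset (Fin n) := Finset.univ.filter (fun j => σ * ‖W.mulVec (zlo k j) j‖ >
          (1 - ε - 4 * δ - 3 * σ * opNorm W / n) * n - h) with hA
  have hcount := count_bad zstar hzstar σ hσ W T hT (by linarith) s ((n : ℝ) - (k : ℝ) * h) h hsk
    hs0.le zh hz1 x hx hz2 (zlo k) (by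
      intro j
      have := (hzlo k hkN j).2
      rw [mul_assoc] at this
      exact this) A (by
      intro j hj
      simp only [hA, Finset.mem_filter, Finset.mem_univ, true_and]
      have e : (1 - ε - 4 * δ - 3 * σ * opNorm W / n) * n - h
        = n - ε * n - 4 * T - 3 * (σ * opNorm W) - h := by
        rw [hTdef]; field_simp
      rw [e]
      nlinarith) B hB (h * Real.sqrt n / T) rfl
  set H := h * Real.sqrt n / T with hH
  have hHsq : H ^ 2 = h ^ 2 / (δ ^ 2 * n) := by
    rw [hH, div_pow, mul_pow, Real.sq_sqrt hn'.le, hTdef]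
    field_simp
  set S := ∑ k ∈ Finset.range (N + 1),
        (1 / (n : ℝ)) * ∑ j : Fin n, ind (σ * ‖W.mulVec (zlo k j) j‖ >
          (1 - ε - 4 * δ - 3 * σ * opNorm W / n) * n - h) with hS
  have ind_nonneg : ∀ Q : Prop, 0 ≤ ind Q := by
    intro Q; unfold ind; split_ifs <;> norm_num
  have hAS : (A.card : ℝ) / n ≤ S := by
    have h1 := Finset.single_le_sum (f := fun k => (1 / (n : ℝ)) * ∑ j : Fin n,
      ind (σ * ‖W.mulVec (zlo k j) j‖ > (1 - ε - 4 * δ - 3 * σ * opNorm W / n) * n - h))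
      (fun i _ => mul_nonneg (by positivity) (Finset.sum_nonneg fun j _ => ind_nonneg _))
      (Finset.mem_range.2 (Nat.lt_succ_of_le hkN))
    refine le_trans (le_of_eq ?_) h1
    have h2 : (A.card : ℝ) = ∑ j : Fin n,
      ind (σ * ‖W.mulVec (zlo k j) j‖ > (1 - ε - 4 * δ - 3 * σ * opNorm W / n) * n - h) := by
      unfold ind
      rw [Finset.sum_boole]
    rw [h2]; ring
  have hA0 : (0:ℝ) ≤ A.card := Nat.cast_nonneg _
  by_cases hbig : h > δ * Real.sqrt n
  · have e1 : ind (h > δ * Real.sqrt n) = 1 := by unfold ind; rw [if_pos hbig]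
    rw [e1, mul_one]
    have e2 : 72 * h ^ 2 / (δ ^ 2 * (n : ℝ) ^ 2) = 72 * (H ^ 2 / n) := by
      rw [hHsq]; field_simp
    rw [e2]
    have h1 : 9.7 * (B.card : ℝ) ≤ 72 * A.card + 72 * H ^ 2 := by nlinarith [sq_nonneg H]
    have h2 : 9.7 * (B.card : ℝ) / n ≤ (72 * A.card + 72 * H ^ 2) / n := by gcongr
    have h3 : (72 * (A.card : ℝ) + 72 * H ^ 2) / n = 72 * (A.card / n) + 72 * (H ^ 2 / n) := by ring
    linarith
  · have e1 : ind (h > δ * Real.sqrt n) = 0 := by unfold ind; rw [if_neg hbig]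
    rw [e1, mul_zero, add_zero]
    push Not at hbig
    have hH1 : H ^ 2 ≤ 1 := by
      rw [hHsq, div_le_one (by positivity)]
      have := pow_le_pow_left₀ hh.le hbig 2
      rwa [mul_pow, Real.sq_sqrt hn'.le] at this
    have h1 : 9.7 * (B.card : ℝ) ≤ 72 * A.card := by
      rcases Nat.eq_zero_or_pos B.card with h0 | h0
      · rw [h0]; simp
      · have : (1:ℝ) ≤ B.card := by exact_mod_cast h0
        linarith
    have h2 : 9.7 * (B.card : ℝ) / n ≤ (72 * A.card) / n := by gcongr
    have h3 : (72 * (A.card : ℝ)) / n = 72 * (A.card / n) := by ring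
    linarith


end PhaseSync
end
end

section
/- Suppose ẑ ∈ ℂ_1^n satisfies ẑ = F_1(ẑ), and set ŝ = (z*)ᴴ ẑ. For any real δ > 0 with δ ≥ 2σ‖W‖/n, let z ∈ ℂ_{≤1}^n be the fixed point of G(·, ŝ, 2δn). Then (1/n)·Σ_{j=1}^n 1{|[Yẑ]_j| < δn} ≤ (9/n)·Σ_{j=1}^n 1{|z*_j ŝ + σ[Wz]_j| < 2δn}. -/
open scoped Classical
open Matrix

noncomputable section

namespace PhaseSync

theorem opNorm_bound {k : ℕ} (A : Matrix (Fin k) (Fin k) ℂ) (v : Fin k → ℂ) :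
    ∑ i, ‖A.mulVec v i‖ ^ 2 ≤ opNorm A ^ 2 * ∑ i, ‖v i‖ ^ 2 := by
  have h := (Matrix.toEuclideanCLM (𝕜 := ℂ) (n := Fin k) A).le_opNorm (WithLp.toLp 2 v)
  have h2 := pow_le_pow_left₀ (norm_nonneg _) h 2
  rw [mul_pow, EuclideanSpace.norm_sq_eq, EuclideanSpace.norm_sq_eq] at h2
  simpa [opNorm] using h2

theorem key_pointwise (t : ℝ) (ht : 0 < t) (x y u : ℂ) (hu : ‖u‖ = 1)
    (hy : y = (‖y‖ : ℂ) * u) (hx : t ≤ ‖x‖) :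
    t * ‖u - gfun t x‖ ≤ 2 * ‖y - x‖ := by
  have hx0 : 0 < ‖x‖ := lt_of_lt_of_le ht hx
  have hxc : ((‖x‖ : ℝ) : ℂ) ≠ 0 := by exact_mod_cast hx0.ne'
  have e : ((‖x‖ : ℝ) : ℂ) * (u - gfun t x) = (((‖x‖ - ‖y‖ : ℝ)) : ℂ) * u + (y - x) := by
    have e1 : ((‖x‖ : ℝ) : ℂ) * gfun t x = x := by
      unfold gfun
      rw [max_eq_left hx]
      field_simp
    rw [mul_sub, e1]
    push_cast
    linear_combination -hy
  have h1 : ‖x‖ * ‖u - gfun t x‖ = ‖((‖x‖ : ℝ) : ℂ) * (u - gfun t x)‖ := by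
    rw [norm_mul, Complex.norm_real, norm_norm]
  have h2 : ‖((‖x‖ : ℝ) : ℂ) * (u - gfun t x)‖ ≤ 2 * ‖y - x‖ := by
    rw [e]
    refine (norm_add_le _ _).trans ?_
    rw [norm_mul, hu, Complex.norm_real, Real.norm_eq_abs]
    have := abs_norm_sub_norm_le x y
    rw [norm_sub_rev] at this
    linarith
  have h3 := mul_le_mul_of_nonneg_right hx (norm_nonneg (u - gfun t x))
  linarith

theorem stmt18 {n : ℕ} (hn : 1 ≤ n)
    (zstar : Fin n → ℂ) (hzstar : ∀ j, ‖zstar j‖ = 1)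
    (σ : ℝ) (hσ : 0 < σ) (W : Matrix (Fin n) (Fin n) ℂ) (hW : W.IsHermitian)
    (Y : Matrix (Fin n) (Fin n) ℂ)
    (hY : Y = Matrix.vecMulVec zstar (star zstar) + (σ : ℂ) • W)
    (zhat : Fin n → ℂ) (hzhat1 : ∀ j, ‖zhat j‖ = 1) (hzhat2 : zhat = F1 Y zhat)
    (δ : ℝ) (hδ0 : 0 < δ) (hδ : 2 * σ * opNorm W / n ≤ δ)
    (z : Fin n → ℂ) (hz1 : ∀ i, ‖z i‖ ≤ 1)
    (hz2 : z = G zstar σ W z (dotProduct (star zstar) zhat) (2 * δ * n)) :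
    (1 / (n : ℝ)) * ∑ j : Fin n, ind (‖Y.mulVec zhat j‖ < δ * n) ≤
      (9 / (n : ℝ)) * ∑ j : Fin n,
        ind (‖zstar j * dotProduct (star zstar) zhat +
          (σ : ℂ) * W.mulVec z j‖ < 2 * δ * n) := by
  set s := dotProduct (star zstar) zhat with hs
  have hnpos : (0 : ℝ) < n := by exact_mod_cast hn
  set t := 2 * δ * n with htdef
  have ht : 0 < t := by positivity
  set x : Fin n → ℂ := fun j => zstar j * s + (σ : ℂ) * W.mulVec z j with hx
  set y : Fin n → ℂ := Y.mulVec zhat with hy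
  have hyj : ∀ j, y j = zstar j * s + (σ : ℂ) * W.mulVec zhat j := by
    intro j
    rw [hy, hY, Matrix.add_mulVec, Matrix.smul_mulVec, Matrix.vecMulVec_mulVec]
    simp [hs]
    ring
  have hyx : ∀ j, y j - x j = (σ : ℂ) * W.mulVec (zhat - z) j := by
    intro j
    rw [hyj, hx, Matrix.mulVec_sub]
    simp only [Pi.sub_apply]
    ring
  have hop : 0 ≤ opNorm W := norm_nonneg _
  have hσt : σ * opNorm W ≤ t / 4 := by
    rw [div_le_iff₀ hnpos] at hδ
    rw [htdef]
    linarith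
  have hD : ∑ j, ‖y j - x j‖ ^ 2 ≤ t ^ 2 / 16 * ∑ j, ‖zhat j - z j‖ ^ 2 := by
    have h1 := opNorm_bound W (zhat - z)
    have h2 : ∑ j, ‖y j - x j‖ ^ 2 = σ ^ 2 * ∑ j, ‖W.mulVec (zhat - z) j‖ ^ 2 := by
      rw [Finset.mul_sum]
      refine Finset.sum_congr rfl fun j _ => ?_
      rw [hyx, norm_mul, mul_pow, Complex.norm_real, Real.norm_eq_abs, sq_abs]
    rw [h2]
    have h3 : (σ * opNorm W) ^ 2 ≤ (t / 4) ^ 2 := pow_le_pow_left₀ (by positivity) hσt 2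
    have h4 : 0 ≤ ∑ j, ‖zhat j - z j‖ ^ 2 := by positivity
    calc σ ^ 2 * ∑ j, ‖W.mulVec (zhat - z) j‖ ^ 2
        ≤ σ ^ 2 * (opNorm W ^ 2 * ∑ j, ‖(zhat - z) j‖ ^ 2) := by gcongr
      _ = (σ * opNorm W) ^ 2 * ∑ j, ‖zhat j - z j‖ ^ 2 := by simp only [Pi.sub_apply]; ring
      _ ≤ (t / 4) ^ 2 * ∑ j, ‖zhat j - z j‖ ^ 2 := by gcongr
      _ = _ := by ring
  have hyu : ∀ j, y j = (‖y j‖ : ℂ) * zhat j := by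
    intro j
    by_cases h : y j = 0
    · simp [h]
    · have hz := congrFun hzhat2 j
      have hF : F1 Y zhat j = y j / (‖y j‖ : ℂ) := by
        unfold F1
        exact if_pos h
      have hc : ((‖y j‖ : ℝ) : ℂ) ≠ 0 := by exact_mod_cast norm_ne_zero_iff.mpr h
      rw [hz, hF]
      field_simp
  have hzj : ∀ j, z j = gfun t (x j) := fun j => congrFun hz2 j
  -- pointwise bounds
  have hp1 : ∀ j, ‖zhat j - z j‖ ^ 2 ≤
      4 / t ^ 2 * ‖y j - x j‖ ^ 2 + 4 * ind (‖x j‖ < t) := by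
    intro j
    by_cases h : ‖x j‖ < t
    · have h2 : ‖zhat j - z j‖ ≤ 2 := by
        have := norm_sub_le (zhat j) (z j)
        linarith [hzhat1 j, hz1 j]
      have h3 := pow_le_pow_left₀ (norm_nonneg _) h2 2
      have h4 : 0 ≤ 4 / t ^ 2 * ‖y j - x j‖ ^ 2 := by positivity
      simp only [ind, if_pos h]
      linarith
    · have h1 := key_pointwise t ht (x j) (y j) (zhat j) (hzhat1 j) (hyu j) (not_lt.mp h)
      rw [← hzj j] at h1
      have h2 := pow_le_pow_left₀ (by positivity) h1 2
      simp only [ind, if_neg h]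
      rw [mul_zero, add_zero, div_mul_eq_mul_div, le_div_iff₀ (by positivity)]
      nlinarith
  have hp2 : ∀ j, ind (‖y j‖ < δ * n) ≤
      ind (‖x j‖ < t) + 4 / t ^ 2 * ‖y j - x j‖ ^ 2 := by
    intro j
    have h4 : 0 ≤ 4 / t ^ 2 * ‖y j - x j‖ ^ 2 := by positivity
    by_cases hA : ‖y j‖ < δ * n
    · by_cases h : ‖x j‖ < t
      · simp only [ind, if_pos h, if_pos hA]
        linarith
      · simp only [ind, if_neg h, if_pos hA]
        have h1 : t / 2 ≤ ‖y j - x j‖ := by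
          have := norm_sub_norm_le (x j) (y j)
          rw [norm_sub_rev] at this
          have h5 := not_lt.mp h
          linarith
        have h2 := pow_le_pow_left₀ (by positivity) h1 2
        rw [zero_add, div_mul_eq_mul_div, le_div_iff₀ (by positivity)]
        nlinarith
    · have : 0 ≤ ind (‖x j‖ < t) := by unfold ind; split_ifs <;> norm_num
      rw [show ind (‖y j‖ < δ * n) = 0 from if_neg hA]
      linarith
  have hs1 := Finset.sum_le_sum (fun j (_ : j ∈ Finset.univ) => hp1 j)
  have hs2 := Finset.sum_le_sum (fun j (_ : j ∈ Finset.univ) => hp2 j)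
  rw [Finset.sum_add_distrib, ← Finset.mul_sum, ← Finset.mul_sum] at hs1
  rw [Finset.sum_add_distrib, ← Finset.mul_sum] at hs2
  have hB : 0 ≤ ∑ j, ind (‖x j‖ < t) :=
    Finset.sum_nonneg fun j _ => by unfold ind; split_ifs <;> norm_num
  have hE : 4 / t ^ 2 * ∑ j, ‖y j - x j‖ ^ 2 ≤ 1 / 4 * ∑ j, ‖zhat j - z j‖ ^ 2 := by
    have := mul_le_mul_of_nonneg_left hD (show 0 ≤ 4 / t ^ 2 by positivity)
    refine this.trans (le_of_eq ?_)
    field_simp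
    norm_num
  have hfin : ∑ j, ind (‖y j‖ < δ * n) ≤ 9 * ∑ j, ind (‖x j‖ < t) := by linarith
  have hr : (9 / (n : ℝ)) * ∑ j, ind (‖x j‖ < t) =
      (1 / (n : ℝ)) * (9 * ∑ j, ind (‖x j‖ < t)) := by ring
  calc _ ≤ (1 / (n : ℝ)) * (9 * ∑ j, ind (‖x j‖ < t)) := by gcongr
    _ = _ := hr.symm

end PhaseSync
end
end
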